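/- arXiv:2008.11968 — 2 statements merged into one kernel-verified Lean document; each statement's English description precedes it below -/
import Mathlib

section
/- Let k be a field of characteristic zero. For each of the seven ideals I_1 = (x_0, x_1^3, x_1^2x_2^2, x_1^2x_2x_3^2, x_1^2x_2x_3x_4^2), I_2 = (x_0, x_1^3, x_1^2x_2x_3x_4, x_1^2x_2^2x_4, x_1^2x_2x_3^2, x_1^2x_2^2x_3, x_1^2x_2^3), I_3 = (x_0, x_1^4, x_1^3x_2, x_1^3x_3, x_1^3x_4, x_1^2x_2^2, x_1^2x_2x_3^2, x_1^2x_2x_3x_4), I_4 = (x_0, x_1^4, x_1^3x_2, x_1^3x_3, x_1^2x_2^2, x_1^2x_2x_3, x_1^3x_4^2), I_5 = (x_0^2, x_0x_1, x_0x_2, x_0x_3, x_0x_4, x_1^3, x_1^2x_2x_3^2, x_1^2x_2x_3x_4, x_1^2x_2^2), I_6 = (x_0^2, x_0x_1, x_0x_2, x_0x_3, x_0x_4, x_1^4, x_1^3x_2, x_1^3x_3, x_1^3x_4, x_1^2x_2^2, x_1^2x_2x_3), I_7 = (x_0^2, x_0x_1, x_0x_2, x_0x_3, x_0x_4^2, x_1^3,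 x_1^2x_2x_3, x_1^2x_2^2) of k[x_0,…,x_5], the double saturation sat_{x_4,x_5}(I_j) equals the ideal (x_0, x_1^3, x_1^2x_2^2, x_1^2x_2x_3) of k[x_0,…,x_3]. -/
open MvPolynomial

set_option maxHeartbeats 1600000

/-- The double saturation `sat_{x_4,x_5}` of an ideal of `k[x_0,…,x_5]`: the ideal of
`k[x_0,…,x_3]` generated by the image under the `k`-algebra map sending
`x_i ↦ x_i` for `i ≤ 3` and `x_4 ↦ 1`, `x_5 ↦ 1`. -/
noncomputable def doubleSat {k : Type*} [Field k]
    (J : Ideal (MvPolynomial (Fin 6) k)) : Ideal (MvPolynomial (Fin 4) k) :=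
  Ideal.map (aeval ![X 0, X 1, X 2, X 3, 1, 1] :
    MvPolynomial (Fin 6) k →ₐ[k] MvPolynomial (Fin 4) k) J

/-- A set `S` containing the four generators and contained in the ideal they generate
spans the same ideal. -/
lemma span_eq_aux {R : Type*} [CommRing R] (a b c d : R) (S : Set R)
    (h1 : a ∈ S) (h2 : b ^ 3 ∈ S) (h3 : b ^ 2 * c ^ 2 ∈ S) (h4 : b ^ 2 * c * d ∈ S)
    (h : ∀ x ∈ S, a ∣ x ∨ b ^ 3 ∣ x ∨ b ^ 2 * c ^ 2 ∣ x ∨ b ^ 2 * c * d ∣ x) :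
    Ideal.span S = Ideal.span {a, b ^ 3, b ^ 2 * c ^ 2, b ^ 2 * c * d} := by
  apply le_antisymm
  · refine Ideal.span_le.2 fun x hx => ?_
    rcases h x hx with h | h | h | h <;>
      exact Ideal.mem_of_dvd _ h (Ideal.subset_span (by simp))
  · refine Ideal.span_mono ?_
    rintro x (rfl | rfl | rfl | rfl) <;> assumption

lemma dvd_aux {R : Type*} [CommRing R] {g x : R} (q : R) (h : x = g * q) : g ∣ x := ⟨q, h⟩

theorem statement_15 (k : Type*) [Field k] [CharZero k]
    (I1 I2 I3 I4 I5 I6 I7 : Ideal (MvPolynomial (Fin 6) k))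
    (hI1 : I1 = Ideal.span {X 0, X 1 ^ 3, X 1 ^ 2 * X 2 ^ 2, X 1 ^ 2 * X 2 * X 3 ^ 2, X 1 ^ 2 * X 2 * X 3 * X 4 ^ 2})
    (hI2 : I2 = Ideal.span {X 0, X 1 ^ 3, X 1 ^ 2 * X 2 * X 3 * X 4, X 1 ^ 2 * X 2 ^ 2 * X 4, X 1 ^ 2 * X 2 * X 3 ^ 2, X 1 ^ 2 * X 2 ^ 2 * X 3, X 1 ^ 2 * X 2 ^ 3})
    (hI3 : I3 = Ideal.span {X 0, X 1 ^ 4, X 1 ^ 3 * X 2, X 1 ^ 3 * X 3, X 1 ^ 3 * X 4, X 1 ^ 2 * X 2 ^ 2, X 1 ^ 2 * X 2 * X 3 ^ 2, X 1 ^ 2 * X 2 * X 3 * X 4})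
    (hI4 : I4 = Ideal.span {X 0, X 1 ^ 4, X 1 ^ 3 * X 2, X 1 ^ 3 * X 3, X 1 ^ 2 * X 2 ^ 2, X 1 ^ 2 * X 2 * X 3, X 1 ^ 3 * X 4 ^ 2})
    (hI5 : I5 = Ideal.span {X 0 ^ 2, X 0 * X 1, X 0 * X 2, X 0 * X 3, X 0 * X 4, X 1 ^ 3, X 1 ^ 2 * X 2 * X 3 ^ 2, X 1 ^ 2 * X 2 * X 3 * X 4, X 1 ^ 2 * X 2 ^ 2})
    (hI6 : I6 = Ideal.span {X 0 ^ 2, X 0 * X 1, X 0 * X 2, X 0 * X 3, X 0 * X 4, X 1 ^ 4, X 1 ^ 3 * X 2, X 1 ^ 3 * X 3, X 1 ^ 3 * X 4, X 1 ^ 2 * X 2 ^ 2, X 1 ^ 2 * X 2 * X 3})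
    (hI7 : I7 = Ideal.span {X 0 ^ 2, X 0 * X 1, X 0 * X 2, X 0 * X 3, X 0 * X 4 ^ 2, X 1 ^ 3, X 1 ^ 2 * X 2 * X 3, X 1 ^ 2 * X 2 ^ 2}) :
    doubleSat I1 = Ideal.span {X 0, X 1 ^ 3, X 1 ^ 2 * X 2 ^ 2, X 1 ^ 2 * X 2 * X 3} ∧
      doubleSat I2 = Ideal.span {X 0, X 1 ^ 3, X 1 ^ 2 * X 2 ^ 2, X 1 ^ 2 * X 2 * X 3} ∧
      doubleSat I3 = Ideal.span {X 0, X 1 ^ 3, X 1 ^ 2 * X 2 ^ 2, X 1 ^ 2 * X 2 * X 3} ∧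
      doubleSat I4 = Ideal.span {X 0, X 1 ^ 3, X 1 ^ 2 * X 2 ^ 2, X 1 ^ 2 * X 2 * X 3} ∧
      doubleSat I5 = Ideal.span {X 0, X 1 ^ 3, X 1 ^ 2 * X 2 ^ 2, X 1 ^ 2 * X 2 * X 3} ∧
      doubleSat I6 = Ideal.span {X 0, X 1 ^ 3, X 1 ^ 2 * X 2 ^ 2, X 1 ^ 2 * X 2 * X 3} ∧
      doubleSat I7 = Ideal.span {X 0, X 1 ^ 3, X 1 ^ 2 * X 2 ^ 2, X 1 ^ 2 * X 2 * X 3} := by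
  subst hI1 hI2 hI3 hI4 hI5 hI6 hI7
  refine ⟨?_, ?_, ?_, ?_, ?_, ?_, ?_⟩
  all_goals
    rw [doubleSat, Ideal.map_span]
    apply span_eq_aux
    · simp [Set.image_insert_eq]
    · simp [Set.image_insert_eq]
    · simp [Set.image_insert_eq]
    · simp [Set.image_insert_eq]
    · intro x hx
      simp only [Set.image_insert_eq, Set.image_singleton, Set.mem_insert_iff,
        Set.mem_singleton_iff, RingHom.coe_coe, map_mul, map_pow, aeval_X] at hx
      simp at hx
      casesm* _ ∨ _
      all_goals
        subst x
        first
          | exact Or.inl (dvd_aux 1 (by ring1))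
          | exact Or.inl (dvd_aux (X 0) (by ring1))
          | exact Or.inl (dvd_aux (X 1) (by ring1))
          | exact Or.inl (dvd_aux (X 2) (by ring1))
          | exact Or.inl (dvd_aux (X 3) (by ring1))
          | exact Or.inr (Or.inl (dvd_aux 1 (by ring1)))
          | exact Or.inr (Or.inl (dvd_aux (X 1) (by ring1)))
          | exact Or.inr (Or.inl (dvd_aux (X 2) (by ring1)))
          | exact Or.inr (Or.inl (dvd_aux (X 3) (by ring1)))
          | exact Or.inr (Or.inr (Or.inl (dvd_aux 1 (by ring1))))
          | exact Or.inr (Or.inr (Or.inl (dvd_aux (X 2) (by ring1))))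
          | exact Or.inr (Or.inr (Or.inl (dvd_aux (X 3) (by ring1))))
          | exact Or.inr (Or.inr (Or.inr (dvd_aux 1 (by ring1))))
          | exact Or.inr (Or.inr (Or.inr (dvd_aux (X 3) (by ring1))))
end

section
/- Let k be a field of characteristic zero. For the ideals I_8 = (x_0^2, x_0x_1, x_0x_2, x_0x_3, x_1^3, x_1^2x_2) and I_9 = (x_0^2, x_0x_1, x_0x_2, x_1^2) of k[x_0,…,x_5], the double saturations are sat_{x_4,x_5}(I_8) = (x_0^2, x_0x_1, x_0x_2, x_0x_3, x_1^3, x_1^2x_2) and sat_{x_4,x_5}(I_9) = (x_0^2, x_0x_1, x_0x_2, x_1^2) as ideals of k[x_0,…,x_3], and neither of these equals the double saturation (x_0, x_1^3, x_1^2x_2^2, x_1^2x_2x_3) of the lexicographic ideal I_1 = (x_0, x_1^3, x_1^2x_2^2, x_1^2x_2x_3^2, x_1^2x_2x_3x_4^2). -/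
open MvPolynomial

theorem X0_notMem_aux {k : Type*} [Field k] (S : Set (MvPolynomial (Fin 4) k))
    (hS : ∀ p ∈ S, (aeval ![DualNumber.eps, 0, 0, 0] :
      MvPolynomial (Fin 4) k →ₐ[k] DualNumber k) p = 0) :
    (X 0 : MvPolynomial (Fin 4) k) ∉ Ideal.span S := by
  intro h
  have hle : Ideal.span S ≤ RingHom.ker (aeval ![DualNumber.eps, 0, 0, 0] :
      MvPolynomial (Fin 4) k →ₐ[k] DualNumber k) :=
    Ideal.span_le.2 fun p hp => hS p hp
  have h0 := hle h
  rw [RingHom.mem_ker] at h0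
  have h1 := congrArg TrivSqZeroExt.snd h0
  simp at h1

theorem statement_16 (k : Type*) [Field k] [CharZero k]
    (I₁ I₈ I₉ : Ideal (MvPolynomial (Fin 6) k))
    (hI₁ : I₁ = Ideal.span {X 0, X 1 ^ 3, X 1 ^ 2 * X 2 ^ 2, X 1 ^ 2 * X 2 * X 3 ^ 2, X 1 ^ 2 * X 2 * X 3 * X 4 ^ 2})
    (hI₈ : I₈ = Ideal.span {X 0 ^ 2, X 0 * X 1, X 0 * X 2, X 0 * X 3, X 1 ^ 3, X 1 ^ 2 * X 2})
    (hI₉ : I₉ = Ideal.span {X 0 ^ 2, X 0 * X 1, X 0 * X 2, X 1 ^ 2}) :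
    doubleSat I₈ = Ideal.span {X 0 ^ 2, X 0 * X 1, X 0 * X 2, X 0 * X 3, X 1 ^ 3, X 1 ^ 2 * X 2} ∧
      doubleSat I₉ = Ideal.span {X 0 ^ 2, X 0 * X 1, X 0 * X 2, X 1 ^ 2} ∧
      doubleSat I₁ = Ideal.span {X 0, X 1 ^ 3, X 1 ^ 2 * X 2 ^ 2, X 1 ^ 2 * X 2 * X 3} ∧
      doubleSat I₈ ≠ Ideal.span {X 0, X 1 ^ 3, X 1 ^ 2 * X 2 ^ 2, X 1 ^ 2 * X 2 * X 3} ∧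
      doubleSat I₉ ≠ Ideal.span {X 0, X 1 ^ 3, X 1 ^ 2 * X 2 ^ 2, X 1 ^ 2 * X 2 * X 3} := by
  have h8 : doubleSat I₈ = Ideal.span
      {X 0 ^ 2, X 0 * X 1, X 0 * X 2, X 0 * X 3, X 1 ^ 3, X 1 ^ 2 * X 2} := by
    subst hI₈
    simp [doubleSat, Ideal.map_span, Set.image_insert_eq]
  have h9 : doubleSat I₉ = Ideal.span {X 0 ^ 2, X 0 * X 1, X 0 * X 2, X 1 ^ 2} := by
    subst hI₉
    simp [doubleSat, Ideal.map_span, Set.image_insert_eq]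
  have hX : (X 0 : MvPolynomial (Fin 4) k) ∈
      Ideal.span {X 0, X 1 ^ 3, X 1 ^ 2 * X 2 ^ 2, X 1 ^ 2 * X 2 * X 3} :=
    Ideal.subset_span (by simp)
  refine ⟨h8, h9, ?_, ?_, ?_⟩
  · subst hI₁
    simp only [doubleSat, Ideal.map_span, Set.image_insert_eq, Set.image_singleton]
    simp only [map_mul, map_pow, aeval_X]
    have e0 : (![X 0, X 1, X 2, X 3, 1, 1] : Fin 6 → MvPolynomial (Fin 4) k) 0 = X 0 := rfl
    have e1 : (![X 0, X 1, X 2, X 3, 1, 1] : Fin 6 → MvPolynomial (Fin 4) k) 1 = X 1 := rfl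
    have e2 : (![X 0, X 1, X 2, X 3, 1, 1] : Fin 6 → MvPolynomial (Fin 4) k) 2 = X 2 := rfl
    have e3 : (![X 0, X 1, X 2, X 3, 1, 1] : Fin 6 → MvPolynomial (Fin 4) k) 3 = X 3 := rfl
    have e4 : (![X 0, X 1, X 2, X 3, 1, 1] : Fin 6 → MvPolynomial (Fin 4) k) 4 = 1 := rfl
    rw [e0, e1, e2, e3, e4, one_pow, mul_one]
    apply le_antisymm
    · rw [Ideal.span_le]
      rintro p (rfl | rfl | rfl | rfl | rfl)
      · exact Ideal.subset_span (by simp)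
      · exact Ideal.subset_span (by simp)
      · exact Ideal.subset_span (by simp)
      · rw [pow_two (X 3), ← mul_assoc]
        exact Ideal.mul_mem_right _ _ (Ideal.subset_span (by simp))
      · exact Ideal.subset_span (by simp)
    · apply Ideal.span_mono
      intro p hp
      simp only [Set.mem_insert_iff, Set.mem_singleton_iff] at hp ⊢
      rcases hp with h | h | h | h
      · exact Or.inl h
      · exact Or.inr (Or.inl h)
      · exact Or.inr (Or.inr (Or.inl h))
      · exact Or.inr (Or.inr (Or.inr (Or.inr h)))
  · intro h
    rw [← h, h8] at hX
    refine X0_notMem_aux _ ?_ hX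
    rintro p (rfl | rfl | rfl | rfl | rfl | rfl) <;> simp [pow_two]
  · intro h
    rw [← h, h9] at hX
    refine X0_notMem_aux _ ?_ hX
    rintro p (rfl | rfl | rfl | rfl) <;> simp [pow_two]
end
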